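/- arXiv:2001.10950 — 2 statements merged into one kernel-verified Lean document; each statement's English description precedes it below -/
import Mathlib

section
/- Let X be a normed vector space over ℝ or ℂ, let K₁, K₂ : X → X be continuous linear operators with ‖K₁‖ ≤ 1/2 and ‖K₂‖ ≤ 1/2, and let g, f₁, f₂ ∈ X satisfy f_j = g + K_j f_j for j = 1, 2. Then for every L ∈ ℕ, ‖f₂ − f₁‖ ≤ (L+1) · 2^{1−L} · ‖K₂ − K₁‖ · ‖f₂‖ + 2 ‖Σ_{l=0}^{L} (K₂^l − K₁^l) g‖. (This is the abstract form of estimate (est:psidif) in the proof of the paper's Theorem 2.2, where the last term is the data mismatch r_n^L of the a priori measurements.) -/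
theorem aux_norm_pow {𝕜 : Type*} [RCLike 𝕜] {X : Type*}
    [NormedAddCommGroup X] [NormedSpace 𝕜 X]
    (K : X →L[𝕜] X) (hK : ‖K‖ ≤ 1 / 2) (n : ℕ) : ‖K ^ n‖ ≤ (1 / 2 : ℝ) ^ n := by
  induction n with
  | zero =>
    rw [pow_zero, pow_zero]
    exact ContinuousLinearMap.norm_id_le (𝕜 := 𝕜) (E := X)
  | succ n ih =>
    rw [pow_succ, pow_succ]
    exact (norm_mul_le _ _).trans (mul_le_mul ih hK (norm_nonneg _) (by positivity))

theorem aux_norm_pow_sub {𝕜 : Type*} [RCLike 𝕜] {X : Type*}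
    [NormedAddCommGroup X] [NormedSpace 𝕜 X]
    (K₁ K₂ : X →L[𝕜] X) (hK₁ : ‖K₁‖ ≤ 1 / 2) (hK₂ : ‖K₂‖ ≤ 1 / 2) (n : ℕ) :
    ‖K₂ ^ n - K₁ ^ n‖ ≤ n * (1 / 2 : ℝ) ^ n * 2 * ‖K₂ - K₁‖ := by
  induction n with
  | zero => simp
  | succ n ih =>
    have e : K₂ ^ (n + 1) - K₁ ^ (n + 1) = K₂ ^ n * (K₂ - K₁) + (K₂ ^ n - K₁ ^ n) * K₁ := by
      rw [pow_succ, pow_succ, mul_sub, sub_mul]; abel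
    rw [e]
    have a : ‖K₂ ^ n * (K₂ - K₁)‖ ≤ (1 / 2 : ℝ) ^ n * ‖K₂ - K₁‖ :=
      (norm_mul_le _ _).trans
        (mul_le_mul_of_nonneg_right (aux_norm_pow K₂ hK₂ n) (norm_nonneg _))
    have b : ‖(K₂ ^ n - K₁ ^ n) * K₁‖ ≤ (n * (1 / 2 : ℝ) ^ n * 2 * ‖K₂ - K₁‖) * (1 / 2) :=
      (norm_mul_le _ _).trans (mul_le_mul ih hK₁ (norm_nonneg _) (by positivity))
    refine (norm_add_le _ _).trans ((add_le_add a b).trans (le_of_eq ?_))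
    push_cast
    ring

theorem aux_expand {𝕜 : Type*} [RCLike 𝕜] {X : Type*}
    [NormedAddCommGroup X] [NormedSpace 𝕜 X]
    (K : X →L[𝕜] X) (g f : X) (h : f = g + K f) (n : ℕ) :
    f = ∑ l ∈ Finset.range n, (K ^ l) g + (K ^ n) f := by
  induction n with
  | zero => simp
  | succ n ih =>
    have e : (K ^ n) f = (K ^ n) g + (K ^ (n + 1)) f := by
      conv_lhs => rw [h]
      rw [map_add, pow_succ]; rfl
    rw [Finset.sum_range_succ, add_assoc, ← e]
    exact ih

/-- If `‖K₁‖ ≤ 1/2`, `‖K₂‖ ≤ 1/2` and `f_j = g + K_j f_j` for `j = 1, 2`, then for every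
`L ∈ ℕ`, `‖f₂ − f₁‖ ≤ (L+1) · 2^{1−L} · ‖K₂ − K₁‖ · ‖f₂‖ + 2 ‖Σ_{l=0}^{L} (K₂^l − K₁^l) g‖`. -/
theorem fixed_point_difference_estimate {𝕜 : Type*} [RCLike 𝕜] {X : Type*}
    [NormedAddCommGroup X] [NormedSpace 𝕜 X]
    (K₁ K₂ : X →L[𝕜] X) (hK₁ : ‖K₁‖ ≤ 1 / 2) (hK₂ : ‖K₂‖ ≤ 1 / 2)
    (g f₁ f₂ : X) (h₁ : f₁ = g + K₁ f₁) (h₂ : f₂ = g + K₂ f₂) (L : ℕ) :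
    ‖f₂ - f₁‖ ≤ ((L : ℝ) + 1) * (2 : ℝ) ^ ((1 : ℤ) - (L : ℤ)) * ‖K₂ - K₁‖ * ‖f₂‖
      + 2 * ‖∑ l ∈ Finset.range (L + 1), (K₂ ^ l - K₁ ^ l) g‖ := by
  have e₁ := aux_expand K₁ g f₁ h₁ (L + 1)
  have e₂ := aux_expand K₂ g f₂ h₂ (L + 1)
  set S := ∑ l ∈ Finset.range (L + 1), (K₂ ^ l - K₁ ^ l) g with hS
  have hS' : S = ∑ l ∈ Finset.range (L + 1), (K₂ ^ l) g
      - ∑ l ∈ Finset.range (L + 1), (K₁ ^ l) g := by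
    rw [hS, ← Finset.sum_sub_distrib]; rfl
  have e : f₂ - f₁ = S + (K₂ ^ (L + 1) - K₁ ^ (L + 1)) f₂ + (K₁ ^ (L + 1)) (f₂ - f₁) := by
    rw [hS', map_sub, sub_apply]
    conv_lhs => rw [e₁, e₂]
    abel
  have a := ((K₂ ^ (L + 1) - K₁ ^ (L + 1)).le_opNorm f₂).trans
    (mul_le_mul_of_nonneg_right (aux_norm_pow_sub K₁ K₂ hK₁ hK₂ (L + 1)) (norm_nonneg _))
  have hp : (1 / 2 : ℝ) ^ (L + 1) ≤ 1 / 2 := by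
    rw [pow_succ]
    have : (1 / 2 : ℝ) ^ L ≤ 1 := pow_le_one₀ (by norm_num) (by norm_num)
    linarith
  have b := ((K₁ ^ (L + 1)).le_opNorm (f₂ - f₁)).trans
    (mul_le_mul_of_nonneg_right ((aux_norm_pow K₁ hK₁ (L + 1)).trans hp) (norm_nonneg _))
  have c : ‖f₂ - f₁‖ ≤ ‖S‖ + ‖(K₂ ^ (L + 1) - K₁ ^ (L + 1)) f₂‖
      + ‖(K₁ ^ (L + 1)) (f₂ - f₁)‖ := by
    conv_lhs => rw [e]
    exact norm_add₃_le
  have z : (2 : ℝ) ^ ((1 : ℤ) - (L : ℤ)) = 4 * (1 / 2 : ℝ) ^ (L + 1) := by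
    rw [zpow_sub₀ (by norm_num), zpow_one, zpow_natCast, pow_succ, one_div, inv_pow]
    ring
  rw [z]
  rw [Nat.cast_add, Nat.cast_one] at a
  linarith
end

section
/- Let (X, d) be a metric space, let W ⊆ X, and let A : X → X be a map whose range is contained in W and which satisfies: d(A x, A y) ≤ (13/8) d(x, y) for all x, y ∈ X, and d(A x, A y) ≤ (7/8) d(x, y) for all x, y ∈ W. Let q* ∈ X be a fixed point of A (A q* = q*), and let q̄ ∈ X, w ∈ W, ε ≥ 0, η ≥ 0 satisfy d(w, q̄) ≤ ε and d(A q̄, w) ≤ η. Then d(q*, w) ≤ 13 ε + 8 η, and consequently d(q*, q̄) ≤ 14 ε + 8 η. (This is the abstract content of Step 4 of the proof of the paper's Theorem 4.1, quantifying stability of the reconstructed potential with respect to mismodeling error ε and noise level η; there w = P_{W_R}(q̄) is the projection of the true potential onto the a priori class.) -/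
/-- Abstract stability of the fixed point of the reconstruction map: if `A : X → X` has
range in `W`, is `13/8`-Lipschitz on `X` and `7/8`-Lipschitz on `W`, `q*` is a fixed point
of `A`, `w ∈ W`, `d(w, q̄) ≤ ε` and `d(A q̄, w) ≤ η`, then `d(q*, w) ≤ 13ε + 8η` and
`d(q*, q̄) ≤ 14ε + 8η`. -/
theorem fixed_point_stability {X : Type*} [MetricSpace X] (W : Set X) (A : X → X)
    (hrange : ∀ x : X, A x ∈ W)
    (hLip : ∀ x y : X, dist (A x) (A y) ≤ (13 / 8) * dist x y)
    (hContr : ∀ x ∈ W, ∀ y ∈ W, dist (A x) (A y) ≤ (7 / 8) * dist x y)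
    (qstar qbar w : X) (hfix : A qstar = qstar) (hw : w ∈ W)
    (ε η : ℝ) (hε : 0 ≤ ε) (hη : 0 ≤ η)
    (h1 : dist w qbar ≤ ε) (h2 : dist (A qbar) w ≤ η) :
    dist qstar w ≤ 13 * ε + 8 * η ∧ dist qstar qbar ≤ 14 * ε + 8 * η := by
  have hq : qstar ∈ W := hfix ▸ hrange qstar
  have a := hContr qstar hq w hw
  rw [hfix] at a
  have b := hLip w qbar
  have c := dist_triangle4 qstar (A w) (A qbar) w
  have d := dist_triangle qstar w qbar
  constructor <;> linarith
end
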